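/- Every Corson compact space is monotonically retractable, and conversely every monotonically retractable compact Hausdorff space is Corson; i.e., a compact Hausdorff space is monotonically retractable if and only if it is Corson. -/

import Mathlib

/-- ω-monotone assignment. -/
def OmegaMonotone {X Y : Type*} (N : Set X → Set Y) : Prop :=
  (∀ A : Set X, A.Countable → (N A).Countable) ∧
  (∀ A B : Set X, A.Countable → B.Countable → A ⊆ B → N A ⊆ N B) ∧
  (∀ u : ℕ → Set X, (∀ n, (u n).Countable) → (∀ n, u n ⊆ u (n + 1)) →
    N (⋃ n, u n) = ⋃ n, N (u n))

/-- A space is monotonically retractable. -/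
def MonotonicallyRetractable (X : Type*) [TopologicalSpace X] : Prop :=
  ∃ (r : Set X → X → X) (N : Set X → Set (Set X)),
    OmegaMonotone N ∧
    ∀ A : Set X, A.Countable →
      Continuous (r A) ∧ r A ∘ r A = r A ∧ A ⊆ Set.range (r A) ∧
      (∀ U : Set X, IsOpen U → ∃ M ⊆ N A, (r A) ⁻¹' U = ⋃₀ M)

/-- A compact space is Corson if it embeds into a Σ-product of real lines:
there is a continuous injection into some `Γ → ℝ` whose values have countable
support. (A continuous injection from a compact space into a Hausdorff space is
automatically an embedding.) -/
def IsCorsonCompact (K : Type u) [TopologicalSpace K] : Prop :=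
  ∃ (Γ : Type u) (f : K → Γ → ℝ), Continuous f ∧ Function.Injective f ∧
    ∀ x : K, {γ : Γ | f x γ ≠ 0}.Countable

/-!
If `K` embeds into a Σ-product of lines, a countable `A ⊆ K` is assigned the retraction that
restricts the coordinates of a point to a countable index set `J ⊇ ⋃ a ∈ A, support a`. Closing `J`
off under the supports of countably many points that meet all nonempty cylinders over `J` keeps
these restrictions inside `K`, and the cylinders over `J` form the network.

Conversely, let `r` and `N` witness monotone retractability. On countable sets `C` that meet every
nonempty intersection of two members of `N C`, the range of `r C` is the closure of `C` and the
retractions `r C` are compatible. Every subset `B` of `K` is thereby assigned a closed set, its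
hull, and compactness glues the retractions for finite subsets of `B` to a retraction `P B` onto the
hull. Countable tightness implies that along a well-ordering `e` of `B` each orbit
`i ↦ P {e j | j ≤ i} x` jumps only countably often. By induction on the cardinality of `B`, the
functions `g ∘ P {e j | j ≤ i} - g ∘ P {e j | j < i}`, with `g` from a point-countable family
separating the points of the hull of `{e j | j ≤ i}`, form together with countably many functions
factoring through `P ∅` a point-countable family separating the points of the hull of `B`. For
`B = K` they are the coordinates of an embedding into a Σ-product.
-/

open Set Filter Topology TopologicalSpace
open scoped Cardinal

section CountableSets

variable {X : Type*}

theorem exists_countable_forall_inter_nonempty {𝓜 : Set (Set X)} (h𝓜 : 𝓜.Countable) :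
    ∃ D : Set X, D.Countable ∧ ∀ M ∈ 𝓜, M.Nonempty → (M ∩ D).Nonempty := by
  classical
  refine ⟨⋃ M ∈ 𝓜, if h : M.Nonempty then {h.some} else ∅, h𝓜.biUnion fun M _ => ?_,
    fun M hM hne => ⟨hne.some, hne.some_mem, mem_biUnion hM (by simp [hne])⟩⟩
  split_ifs
  exacts [countable_singleton _, countable_empty]

theorem countable_finset_coe_subset {A : Set X} (hA : A.Countable) :
    {F : Finset X | ↑F ⊆ A}.Countable := by
  refine ((countable_ofPred_finite_subset hA).preimage_of_injOn
    Finset.coe_injective.injOn).mono fun F hF => ?_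
  exact ⟨F.finite_toSet, hF⟩

theorem directed_finset_coe_subset (A : Set X) :
    Directed (· ⊆ ·) fun F : {F : Finset X // ↑F ⊆ A} => (F : Set X) := by
  classical
  intro F G
  exact ⟨⟨F ∪ G, by simp [F.2, G.2]⟩, by simp, by simp⟩

theorem iUnion_finset_coe_subset (A : Set X) :
    ⋃ F : {F : Finset X // ↑F ⊆ A}, (F : Set X) = A :=
  (iUnion_subset fun F => F.2).antisymm fun a ha =>
    mem_iUnion.2 ⟨⟨{a}, by simpa using ha⟩, by simp⟩

end CountableSets

section OmegaMonotone

variable {X Y Z : Type*}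

theorem omegaMonotone_of_monotone {N : Set X → Set Y}
    (hcount : ∀ A : Set X, A.Countable → (N A).Countable) (hmono : Monotone N)
    (hunion : ∀ u : ℕ → Set X, Monotone u → N (⋃ n, u n) ⊆ ⋃ n, N (u n)) : OmegaMonotone N :=
  ⟨hcount, fun _ _ _ _ h => hmono h, fun u _ hu =>
    (hunion u (monotone_nat_of_le_succ hu)).antisymm
      (iUnion_subset fun n => hmono (subset_iUnion u n))⟩

theorem omegaMonotone_biUnion {g : X → Set Y} (hg : ∀ x, (g x).Countable) :
    OmegaMonotone fun A => ⋃ a ∈ A, g a :=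
  omegaMonotone_of_monotone (fun _ hA => hA.biUnion fun a _ => hg a)
    (fun _ _ h => biUnion_subset_biUnion_left h) fun u _ => (biUnion_iUnion u g).subset

theorem omegaMonotone_finite_subsets :
    OmegaMonotone fun A : Set X => {F : Set X | F.Finite ∧ F ⊆ A} :=
  omegaMonotone_of_monotone (fun _ hA => countable_ofPred_finite_subset hA)
    (fun _ _ h _ hF => ⟨hF.1, hF.2.trans h⟩) fun u hu F ⟨hF, hFu⟩ => by
      obtain ⟨n, hn⟩ := hu.directed_le.exists_mem_subset_of_finset_subset_biUnion
        (s := hF.toFinset) (by simpa using hFu)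
      exact mem_iUnion.2 ⟨n, hF, by simpa using hn⟩

namespace OmegaMonotone

theorem comp {P : Set Y → Set Z} {N : Set X → Set Y} (hP : OmegaMonotone P)
    (hN : OmegaMonotone N) : OmegaMonotone (P ∘ N) := by
  refine ⟨fun A hA => hP.1 _ (hN.1 A hA),
    fun A B hA hB h => hP.2.1 _ _ (hN.1 A hA) (hN.1 B hB) (hN.2.1 A B hA hB h), ?_⟩
  intro u hu hsucc
  simp only [Function.comp_apply, hN.2.2 u hu hsucc]
  exact hP.2.2 _ (fun n => hN.1 _ (hu n)) fun n => hN.2.1 _ _ (hu n) (hu _) (hsucc n)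

theorem image {N : Set X → Set Y} (hN : OmegaMonotone N) (g : Y → Z) :
    OmegaMonotone fun A => g '' N A := by
  have hg : OmegaMonotone fun B : Set Y => g '' B :=
    omegaMonotone_of_monotone (fun _ hB => hB.image g) (fun _ _ h => image_mono h)
      fun u _ => (image_iUnion (f := g) (s := u)).subset
  exact hg.comp hN

theorem exists_finset_of_mem {N : Set X → Set Y} (hN : OmegaMonotone N) {A : Set X}
    (hA : A.Countable) {y : Y} (hy : y ∈ N A) : ∃ F : Finset X, ↑F ⊆ A ∧ y ∈ N F := by
  classical
  obtain rfl | hne := A.eq_empty_or_nonempty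
  · exact ⟨∅, by simp, by simpa using hy⟩
  obtain ⟨a, rfl⟩ := hA.exists_eq_range hne
  let u : ℕ → Finset X := fun n => (Finset.range n).image a
  have hu : ⋃ n, (u n : Set X) = range a := by
    refine (iUnion_subset fun n => by simp [u]).antisymm ?_
    rintro _ ⟨n, rfl⟩
    exact mem_iUnion.2 ⟨n + 1, by simpa [u] using ⟨n, le_rfl, rfl⟩⟩
  have hsucc (n : ℕ) : (u n : Set X) ⊆ u (n + 1) :=
    Finset.coe_subset.2 (Finset.image_subset_image (Finset.range_subset_range.2 n.le_succ))
  rw [← hu, hN.2.2 _ (fun n => (u n).countable_toSet) hsucc] at hy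
  obtain ⟨n, hn⟩ := mem_iUnion.1 hy
  exact ⟨u n, hu ▸ subset_iUnion (fun n => (u n : Set X)) n, hn⟩

end OmegaMonotone

end OmegaMonotone

section FinitaryClosure

variable {α : Type*}

/-- The closure operator whose closed sets are the sets `T` with `ψ F ⊆ T` for every finite
`F ⊆ T`. It plays the role of closing off a set under Skolem functions. -/
def finitaryClosure (ψ : Finset α → Set α) : ClosureOperator (Set α) :=
  .ofCompletePred (fun T => ∀ F : Finset α, ↑F ⊆ T → ψ F ⊆ T) fun _ h𝒯 F hF =>
    le_sInf fun T hT => h𝒯 T hT F (hF.trans (sInf_le hT))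

variable {ψ : Finset α → Set α}

theorem subset_finitaryClosure_of_coe_subset {S : Set α} {F : Finset α}
    (hF : ↑F ⊆ finitaryClosure ψ S) : ψ F ⊆ finitaryClosure ψ S :=
  (finitaryClosure ψ).isClosed_closure S F hF

theorem finitaryClosure_iUnion_of_directed {ι : Type*} [Nonempty ι] {S : ι → Set α}
    (hS : Directed (· ⊆ ·) S) :
    finitaryClosure ψ (⋃ i, S i) = ⋃ i, finitaryClosure ψ (S i) := by
  have hdir : Directed (· ⊆ ·) fun i => finitaryClosure ψ (S i) :=
    hS.mono_comp _ (finitaryClosure ψ).monotone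
  refine ClosureOperator.closure_min (iUnion_mono fun i => (finitaryClosure ψ).le_closure _)
    (fun F hF => ?_) |>.antisymm
    (iUnion_subset fun i => (finitaryClosure ψ).monotone (subset_iUnion S i))
  obtain ⟨i, hi⟩ := hdir.exists_mem_subset_of_finset_subset_biUnion hF
  exact (subset_finitaryClosure_of_coe_subset hi).trans
    (subset_iUnion (fun i => finitaryClosure ψ (S i)) i)

theorem finitaryClosure_eq_iUnion_finset (S : Set α) :
    finitaryClosure ψ S = ⋃ F : {F : Finset α // ↑F ⊆ S}, finitaryClosure ψ (F : Set α) := by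
  have : Nonempty {F : Finset α // ↑F ⊆ S} := ⟨∅, by simp⟩
  rw [← finitaryClosure_iUnion_of_directed (directed_finset_coe_subset S),
    iUnion_finset_coe_subset]

theorem exists_finset_coe_subset_finitaryClosure {S : Set α} {F : Finset α}
    (hF : ↑F ⊆ finitaryClosure ψ S) :
    ∃ G : Finset α, ↑G ⊆ S ∧ ↑F ⊆ finitaryClosure ψ (G : Set α) := by
  have : Nonempty {F : Finset α // ↑F ⊆ S} := ⟨∅, by simp⟩
  have hdir := (directed_finset_coe_subset S).mono_comp _ (finitaryClosure ψ).monotone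
  rw [finitaryClosure_eq_iUnion_finset] at hF
  obtain ⟨G, hG⟩ := hdir.exists_mem_subset_of_finset_subset_biUnion hF
  exact ⟨G, G.2, hG⟩

theorem exists_countable_subset_finitaryClosure {S E : Set α} (hE : E.Countable)
    (hES : E ⊆ finitaryClosure ψ S) : ∃ D ⊆ S, D.Countable ∧ E ⊆ finitaryClosure ψ D := by
  have := hE.to_subtype
  rw [finitaryClosure_eq_iUnion_finset] at hES
  choose G hG using fun x : E => mem_iUnion.1 (hES x.2)
  refine ⟨⋃ x, (G x : Set α), iUnion_subset fun x => (G x).2,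
    countable_iUnion fun x => (G x).1.countable_toSet, fun x hx => ?_⟩
  exact (finitaryClosure ψ).monotone (subset_iUnion (fun x => (G x : Set α)) ⟨x, hx⟩) (hG ⟨x, hx⟩)

theorem countable_finitaryClosure (hψ : ∀ F, (ψ F).Countable) {S : Set α} (hS : S.Countable) :
    (finitaryClosure ψ S).Countable := by
  let step (T : Set α) : Set α := T ∪ ⋃ F ∈ {F : Finset α | ↑F ⊆ T}, ψ F
  have hcount (n : ℕ) : (step^[n] S).Countable := by
    induction n with
    | zero => exact hS
    | succ n ih =>
      rw [Function.iterate_succ_apply']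
      exact ih.union ((countable_finset_coe_subset ih).biUnion fun F _ => hψ F)
  have hmono : Monotone fun n => step^[n] S := monotone_nat_of_le_succ fun n => by
    rw [Function.iterate_succ_apply']
    exact subset_union_left
  refine (countable_iUnion hcount).mono
    (ClosureOperator.closure_min (subset_iUnion (fun n => step^[n] S) 0) fun F hF => ?_)
  obtain ⟨n, hn⟩ := hmono.directed_le.exists_mem_subset_of_finset_subset_biUnion hF
  refine Subset.trans ?_ (subset_iUnion (fun n => step^[n] S) (n + 1))
  rw [Function.iterate_succ_apply']
  exact (subset_biUnion_of_mem (u := ψ) hn).trans subset_union_right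

theorem omegaMonotone_finitaryClosure (hψ : ∀ F, (ψ F).Countable) :
    OmegaMonotone (finitaryClosure ψ) :=
  omegaMonotone_of_monotone (fun _ => countable_finitaryClosure hψ) (finitaryClosure ψ).monotone
    fun _ hu => (finitaryClosure_iUnion_of_directed hu.directed_le).subset

end FinitaryClosure

/-- `N` is a network of the map `ρ`: the preimage of every open set is a union of members
of `N`. -/
def IsNetworkOf {X Y : Type*} [TopologicalSpace Y] (N : Set (Set X)) (ρ : X → Y) : Prop :=
  ∀ U : Set Y, IsOpen U → ∃ M ⊆ N, ρ ⁻¹' U = ⋃₀ M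

theorem IsNetworkOf.exists_mem_mapsTo {X Y : Type*} [TopologicalSpace Y] {N : Set (Set X)}
    {ρ : X → Y} (hN : IsNetworkOf N ρ) {U : Set Y} (hU : IsOpen U) {x : X} (hx : ρ x ∈ U) :
    ∃ M ∈ N, x ∈ M ∧ MapsTo ρ M U := by
  obtain ⟨𝓜, h𝓜, hpre⟩ := hN U hU
  have hx' : x ∈ ⋃₀ 𝓜 := hpre ▸ hx
  obtain ⟨M, hM, hxM⟩ := hx'
  exact ⟨M, h𝓜 hM, hxM, (subset_sUnion_of_mem hM).trans hpre.superset⟩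

section Cylinders

variable {X Γ Y : Type*} [TopologicalSpace Y] [SecondCountableTopology Y]

/-- The preimages of basic open sets under the coordinates of `f` in `I`. They generate the
topology on `X` induced by these coordinates. -/
def coordinateSubbasis (f : X → Γ → Y) (I : Set Γ) : Set (Set X) :=
  ⋃ i ∈ I, (fun B => (f · i) ⁻¹' B) '' countableBasis Y

/-- The finite intersections of members of `coordinateSubbasis f I`, i.e. the preimages under `f`
of basic cylinders supported on finite subsets of `I`. -/
def cylinders (f : X → Γ → Y) (I : Set Γ) : Set (Set X) :=
  (fun 𝓕 => ⋂₀ 𝓕) '' {𝓕 | 𝓕.Finite ∧ 𝓕 ⊆ coordinateSubbasis f I}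

theorem omegaMonotone_cylinders (f : X → Γ → Y) : OmegaMonotone (cylinders f) :=
  have hsub : OmegaMonotone (coordinateSubbasis f) :=
    omegaMonotone_biUnion fun _ => (countable_countableBasis Y).image _
  (omegaMonotone_finite_subsets.comp hsub).image _

theorem exists_finset_mem_cylinders {f : X → Γ → Y} {I : Set Γ} {M : Set X}
    (hM : M ∈ cylinders f I) : ∃ F : Finset Γ, ↑F ⊆ I ∧ M ∈ cylinders f F := by
  obtain ⟨𝓕, ⟨hfin, h𝓕⟩, rfl⟩ := hM
  have : Nonempty {F : Finset Γ // ↑F ⊆ I} := ⟨∅, by simp⟩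
  have hdir := (directed_finset_coe_subset I).mono_comp _ (g := coordinateSubbasis f)
    fun _ _ h => biUnion_subset_biUnion_left h
  have hcover : coordinateSubbasis f I =
      ⋃ F : {F : Finset Γ // ↑F ⊆ I}, coordinateSubbasis f (F : Set Γ) := by
    conv_lhs => rw [← iUnion_finset_coe_subset I, coordinateSubbasis, biUnion_iUnion]
    rfl
  obtain ⟨F, hF⟩ := hdir.exists_mem_subset_of_finset_subset_biUnion (s := hfin.toFinset)
    (by simpa [hcover] using h𝓕)
  exact ⟨F, F.2, 𝓕, ⟨hfin, by simpa using hF⟩, rfl⟩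

theorem isTopologicalBasis_cylinders (f : X → Γ → Y) (I : Set Γ) :
    @IsTopologicalBasis X (generateFrom (coordinateSubbasis f I)) (cylinders f I) :=
  letI := generateFrom (coordinateSubbasis f I)
  isTopologicalBasis_of_subbasis rfl

theorem le_generateFrom_coordinateSubbasis [tX : TopologicalSpace X]
    {f : X → Γ → Y} (hf : Continuous f) (I : Set Γ) :
    tX ≤ generateFrom (coordinateSubbasis f I) := by
  refine le_generateFrom fun s hs => ?_
  obtain ⟨i, -, B, hB, rfl⟩ := mem_iUnion₂.1 hs
  exact (isOpen_of_mem_countableBasis hB).preimage ((continuous_apply i).comp hf)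

variable [Zero Y]

theorem continuous_indicator_generateFrom (f : X → Γ → Y) (I : Set Γ) :
    Continuous[generateFrom (coordinateSubbasis f I), Pi.topologicalSpace]
      fun x => I.indicator (f x) := by
  classical
  let := generateFrom (coordinateSubbasis f I)
  refine continuous_pi fun i => ?_
  by_cases hi : i ∈ I
  · simp only [indicator_of_mem hi]
    exact (isBasis_countableBasis Y).continuous_iff.2 fun B hB =>
      isOpen_generateFrom_of_mem (mem_biUnion hi ⟨B, hB, rfl⟩)
  · simpa only [indicator_of_notMem hi] using continuous_const

-- In the topology induced by the coordinates in `I`, the union of the sets `D F` is dense, and on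
-- it `I.indicator (f x)` coincides with `f x`.
theorem indicator_mem_closure_range {f : X → Γ → Y} {I : Set Γ} {D : Finset Γ → Set X}
    (hD : ∀ F : Finset Γ, ∀ M ∈ cylinders f F, M.Nonempty → (M ∩ D F).Nonempty)
    (hI : ∀ F : Finset Γ, ↑F ⊆ I → ∀ d ∈ D F, Function.support (f d) ⊆ I) (x : X) :
    I.indicator (f x) ∈ closure (range f) := by
  let := generateFrom (coordinateSubbasis f I)
  let E : Set X := ⋃ F ∈ {F : Finset Γ | ↑F ⊆ I}, D F
  have hE : Dense E := (isTopologicalBasis_cylinders f I).dense_iff.2 fun M hM hne => by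
    obtain ⟨F, hFI, hMF⟩ := exists_finset_mem_cylinders hM
    exact (hD F M hMF hne).mono (inter_subset_inter_right _ (subset_biUnion_of_mem (u := D) hFI))
  have hfE : (fun x => I.indicator (f x)) '' E ⊆ range f := by
    rintro _ ⟨d, hd, rfl⟩
    obtain ⟨F, hF, hdF⟩ := mem_iUnion₂.1 hd
    exact ⟨d, (indicator_eq_self.2 (hI F hF d hdF)).symm⟩
  exact closure_mono hfE
    ((continuous_indicator_generateFrom f I).range_subset_closure_image_dense hE ⟨x, rfl⟩)

variable [tX : TopologicalSpace X]

theorem continuous_generateFrom_of_apply_eq_indicator {f : X → Γ → Y} (hf : IsInducing f)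
    {I : Set Γ} {r : X → X} (hr : ∀ x, f (r x) = I.indicator (f x)) :
    Continuous[generateFrom (coordinateSubbasis f I), tX] r := by
  rw [hf.eq_induced, continuous_induced_rng]
  exact (funext hr : f ∘ r = _) ▸ continuous_indicator_generateFrom f I

theorem isNetworkOf_cylinders {f : X → Γ → Y} (hf : IsInducing f) {I : Set Γ} {r : X → X}
    (hr : ∀ x, f (r x) = I.indicator (f x)) : IsNetworkOf (cylinders f I) r := fun U hU =>
  @IsTopologicalBasis.open_eq_sUnion _ (generateFrom (coordinateSubbasis f I)) _
    (isTopologicalBasis_cylinders f I) _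
    (continuous_def.1 (continuous_generateFrom_of_apply_eq_indicator hf hr) U hU)

end Cylinders

theorem IsCorsonCompact.monotonicallyRetractable {K : Type*} [TopologicalSpace K] [CompactSpace K]
    (h : IsCorsonCompact K) : MonotonicallyRetractable K := by
  obtain ⟨Γ, f, hf, hinj, hsupp⟩ := h
  have hemb := hf.isClosedEmbedding hinj
  choose D hDc hD using fun F : Finset Γ => exists_countable_forall_inter_nonempty
    ((omegaMonotone_cylinders f).1 F F.countable_toSet)
  let ψ (F : Finset Γ) : Set Γ := ⋃ d ∈ D F, Function.support (f d)
  have hψ (F : Finset Γ) : (ψ F).Countable := (hDc F).biUnion fun d _ => hsupp d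
  let J (A : Set K) : Set Γ := finitaryClosure ψ (⋃ a ∈ A, Function.support (f a))
  have hJ : OmegaMonotone J :=
    (omegaMonotone_finitaryClosure hψ).comp (omegaMonotone_biUnion hsupp)
  have hrange (A : Set K) (x : K) : (J A).indicator (f x) ∈ range f :=
    hemb.isClosed_range.closure_subset <| indicator_mem_closure_range hD (fun F hF d hd =>
      (subset_biUnion_of_mem (u := fun d => Function.support (f d)) hd).trans
        (subset_finitaryClosure_of_coe_subset hF)) x
  choose r hr using hrange
  refine ⟨r, cylinders f ∘ J, (omegaMonotone_cylinders f).comp hJ, fun A _ => ⟨?_, ?_, ?_, ?_⟩⟩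
  · exact continuous_le_dom (le_generateFrom_coordinateSubbasis hf (J A))
      (continuous_generateFrom_of_apply_eq_indicator hemb.isInducing (hr A))
  · exact funext fun x => hinj (by simp [hr, indicator_indicator])
  · refine fun a ha => ⟨a, hinj ?_⟩
    rw [hr, indicator_eq_self]
    exact (subset_biUnion_of_mem (u := fun a => Function.support (f a)) ha).trans
      ((finitaryClosure ψ).le_closure _)
  · exact isNetworkOf_cylinders hemb.isInducing (hr A)

section MonotoneRetraction

/-- The family `G` of real-valued functions separates the points of `T`. -/
def SeparatesOn {X : Type*} [TopologicalSpace X] (G : Set C(X, ℝ)) (T : Set X) : Prop :=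
  ∀ ⦃x⦄, x ∈ T → ∀ ⦃y⦄, y ∈ T → (∀ g ∈ G, g x = g y) → x = y

theorem SeparatesOn.mono {X : Type*} [TopologicalSpace X] {G : Set C(X, ℝ)} {T T' : Set X}
    (hG : SeparatesOn G T') (hT : T ⊆ T') : SeparatesOn G T :=
  fun _ hx _ hy => hG (hT hx) (hT hy)

theorem IsNetworkOf.exists_countable_separatesOn_range {X Y : Type*} [TopologicalSpace Y]
    [T4Space Y] {N : Set (Set X)} (hNc : N.Countable) {ρ : X → Y} (hN : IsNetworkOf N ρ) :
    ∃ G : Set C(Y, ℝ), G.Countable ∧ SeparatesOn G (range ρ) := by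
  let Q (M M' : Set X) : Set C(Y, ℝ) :=
    {g | (∀ z ∈ M, g (ρ z) = 0) ∧ ∀ z ∈ M', g (ρ z) = 1}
  obtain ⟨G, hGc, hG⟩ := exists_countable_forall_inter_nonempty (hNc.image2 hNc Q)
  refine ⟨G, hGc, ?_⟩
  rintro _ ⟨x, rfl⟩ _ ⟨y, rfl⟩ hxy
  by_contra hne
  obtain ⟨U, hxU, hU, V, hyV, hV, hUV⟩ := exists_open_nhds_disjoint_closure hne
  obtain ⟨M, hM, hxM, hMU⟩ := hN.exists_mem_mapsTo hU hxU
  obtain ⟨M', hM', hyM', hMV⟩ := hN.exists_mem_mapsTo hV hyV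
  obtain ⟨g₀, hg₀U, hg₀V, -⟩ :=
    exists_continuous_zero_one_of_isClosed isClosed_closure isClosed_closure hUV
  have hQ : (Q M M').Nonempty := ⟨g₀, fun z hz => hg₀U (subset_closure (hMU hz)),
    fun z hz => hg₀V (subset_closure (hMV hz))⟩
  obtain ⟨g, ⟨hg0, hg1⟩, hgG⟩ := hG _ (mem_image2_of_mem hM hM') hQ
  exact zero_ne_one ((hg0 x hxM).symm.trans ((hxy g hgG).trans (hg1 y hyM')))

section Saturation

variable {X : Type*} {N : Set X → Set (Set X)}

/-- Any two members of `N C` that meet do so in a point of `C`. This is the form in which a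
countable set `C` is closed off under a choice of points from the network `N C`. -/
def IsSaturated (N : Set X → Set (Set X)) (C : Set X) : Prop :=
  ∀ M ∈ N C, ∀ M' ∈ N C, (M ∩ M').Nonempty → (M ∩ M' ∩ C).Nonempty

theorem OmegaMonotone.exists_finset_of_mem_of_mem (hN : OmegaMonotone N) {A : Set X}
    (hA : A.Countable) {M M' : Set X} (hM : M ∈ N A) (hM' : M' ∈ N A) :
    ∃ F : Finset X, ↑F ⊆ A ∧ M ∈ N F ∧ M' ∈ N F := by
  classical
  obtain ⟨F, hF, hMF⟩ := hN.exists_finset_of_mem hA hM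
  obtain ⟨F', hF', hMF'⟩ := hN.exists_finset_of_mem hA hM'
  have hmono {G : Finset X} (hG : G ⊆ F ∪ F') : N G ⊆ N ↑(F ∪ F') :=
    hN.2.1 _ _ G.countable_toSet (F ∪ F').countable_toSet (Finset.coe_subset.2 hG)
  exact ⟨F ∪ F', by simp [hF, hF'], hmono Finset.subset_union_left hMF,
    hmono Finset.subset_union_right hMF'⟩

theorem OmegaMonotone.exists_finitaryClosure_isSaturated (hN : OmegaMonotone N) :
    ∃ ψ : Finset X → Set X, (∀ F, (ψ F).Countable) ∧
      ∀ D : Set X, D.Countable → IsSaturated N (finitaryClosure ψ D) := by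
  choose ψ hψc hψ using fun F : Finset X => exists_countable_forall_inter_nonempty
    ((hN.1 F F.countable_toSet).image2 (hN.1 F F.countable_toSet) (· ∩ ·))
  refine ⟨ψ, hψc, fun D hD M hM M' hM' hne => ?_⟩
  obtain ⟨F, hF, hMF, hMF'⟩ :=
    hN.exists_finset_of_mem_of_mem (countable_finitaryClosure hψc hD) hM hM'
  exact (hψ F _ (mem_image2_of_mem hMF hMF') hne).mono
    (inter_subset_inter_right _ (subset_finitaryClosure_of_coe_subset hF))

end Saturation

variable {X : Type*} [TopologicalSpace X] {r : Set X → X → X} {N : Set X → Set (Set X)}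

/-- The retractions `r A` and the families `N A` witness monotone retractability. That `r A` is
idempotent with `A` in its range enters as `r A` fixing the points of `A`. -/
structure IsMonotoneRetraction (r : Set X → X → X) (N : Set X → Set (Set X)) : Prop where
  omegaMonotone : OmegaMonotone N
  continuous {A : Set X} (hA : A.Countable) : Continuous (r A)
  apply_eq_self {A : Set X} (hA : A.Countable) {a : X} (ha : a ∈ A) : r A a = a
  isNetworkOf {A : Set X} (hA : A.Countable) : IsNetworkOf (N A) (r A)

theorem MonotonicallyRetractable.exists_isMonotoneRetraction (h : MonotonicallyRetractable X) :
    ∃ (r : Set X → X → X) (N : Set X → Set (Set X)), IsMonotoneRetraction r N := by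
  obtain ⟨r, N, hN, hr⟩ := h
  refine ⟨r, N, hN, fun hA => (hr _ hA).1, fun {A} hA a ha => ?_, fun hA => (hr _ hA).2.2.2⟩
  obtain ⟨b, rfl⟩ := (hr A hA).2.2.1 ha
  exact congrFun (hr A hA).2.1 b

namespace IsMonotoneRetraction

variable (h : IsMonotoneRetraction r N)
include h

theorem apply_eq_self_of_mem_closure [T2Space X] {A : Set X} (hA : A.Countable) {a : X}
    (ha : a ∈ closure A) : r A a = a :=
  closure_minimal (fun _ => h.apply_eq_self hA) (isClosed_eq (h.continuous hA) continuous_id) ha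

theorem exists_countable_subset_mem_closure {B : Set X} {y : X} (hy : y ∈ closure B) :
    ∃ E ⊆ B, E.Countable ∧ y ∈ closure E := by
  choose φ hφc hφ using fun F : Finset X => exists_countable_forall_inter_nonempty
    ((h.omegaMonotone.1 F F.countable_toSet).image (· ∩ B))
  let E := finitaryClosure φ {y}
  have hE : E.Countable := countable_finitaryClosure hφc (countable_singleton y)
  have hyE : y ∈ E := (finitaryClosure φ).le_closure _ rfl
  refine ⟨B ∩ E, inter_subset_left, hE.mono inter_subset_right, ?_⟩
  refine mem_closure_iff.2 fun U hU hyU => ?_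
  obtain ⟨b, hbU, hbB⟩ := mem_closure_iff.1 hy _ (hU.preimage (h.continuous hE))
    (mem_preimage.2 ((h.apply_eq_self hE hyE).symm ▸ hyU))
  obtain ⟨M, hM, hbM, hMU⟩ := (h.isNetworkOf hE).exists_mem_mapsTo hU hbU
  obtain ⟨F, hF, hMF⟩ := h.omegaMonotone.exists_finset_of_mem hE hM
  obtain ⟨p, ⟨hpM, hpB⟩, hpF⟩ := hφ F _ (mem_image_of_mem _ hMF) ⟨b, hbM, hbB⟩
  have hpE : p ∈ E := subset_finitaryClosure_of_coe_subset hF hpF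
  exact ⟨p, h.apply_eq_self hE hpE ▸ hMU hpM, hpB, hpE⟩

theorem apply_mem_closure_of_mapsTo {C C' U M : Set X} (hC' : C'.Countable) (hCC' : C ⊆ C')
    (hsat : IsSaturated N C) (hM : M ∈ N C) (hMU : MapsTo (r C') M U) {x : X} (hx : x ∈ M) :
    r C x ∈ closure (U ∩ C) := by
  have hC := hC'.mono hCC'
  refine mem_closure_iff.2 fun W hW hxW => ?_
  obtain ⟨M', hM', hxM', hMW⟩ := (h.isNetworkOf hC).exists_mem_mapsTo hW hxW
  obtain ⟨p, ⟨hpM, hpM'⟩, hpC⟩ := hsat M hM M' hM' ⟨x, hx, hxM'⟩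
  exact ⟨p, h.apply_eq_self hC hpC ▸ hMW hpM', h.apply_eq_self hC' (hCC' hpC) ▸ hMU hpM, hpC⟩

theorem apply_mem_closure {C : Set X} (hC : C.Countable) (hsat : IsSaturated N C) (x : X) :
    r C x ∈ closure C := by
  obtain ⟨M, hM, hx, -⟩ := (h.isNetworkOf hC).exists_mem_mapsTo isOpen_univ (mem_univ (r C x))
  simpa using h.apply_mem_closure_of_mapsTo hC Subset.rfl hsat hM (mapsTo_univ _ _) hx

theorem apply_apply_of_subset [T2Space X] {C C' : Set X} (hC' : C'.Countable) (hCC' : C ⊆ C')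
    (hsat : IsSaturated N C') (x : X) : r C (r C' x) = r C x := by
  by_contra hne
  have hC := hC'.mono hCC'
  obtain ⟨V, U, hV, hU, hxV, hxU, hVU⟩ := t2_separation hne
  obtain ⟨M, hM, hxM, hMU⟩ := (h.isNetworkOf hC).exists_mem_mapsTo hU hxU
  obtain ⟨M', hM', hxM', hMV⟩ :=
    (h.isNetworkOf hC').exists_mem_mapsTo (hV.preimage (h.continuous hC)) hxV
  obtain ⟨p, ⟨hpM, hpM'⟩, hpC'⟩ :=
    hsat M (h.omegaMonotone.2.1 _ _ hC hC' hCC' hM) M' hM' ⟨x, hxM, hxM'⟩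
  have hpV : r C p ∈ V := by simpa [h.apply_eq_self hC' hpC'] using hMV hpM'
  exact disjoint_left.1 hVU hpV (hMU hpM)

theorem exists_countable_subset_mem_closure_finitaryClosure {ψ : Finset X → Set X} {B : Set X}
    {y : X} (hy : y ∈ closure (finitaryClosure ψ B)) :
    ∃ D ⊆ B, D.Countable ∧ y ∈ closure (finitaryClosure ψ D) := by
  obtain ⟨E, hEB, hE, hyE⟩ := h.exists_countable_subset_mem_closure hy
  obtain ⟨D, hDB, hD, hED⟩ := exists_countable_subset_finitaryClosure hE hEB
  exact ⟨D, hDB, hD, closure_mono hED hyE⟩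

variable {ψ : Finset X → Set X} (hψ : ∀ F, (ψ F).Countable)
  (hsat : ∀ D : Set X, D.Countable → IsSaturated N (finitaryClosure ψ D))
include hψ hsat

theorem eq_of_forall_finset [T25Space X] {D : Set X} (hD : D.Countable) {u v : X}
    (huv : ∀ F : Finset X, ↑F ⊆ D → r (finitaryClosure ψ F) u = r (finitaryClosure ψ F) v) :
    r (finitaryClosure ψ D) u = r (finitaryClosure ψ D) v := by
  by_contra hne
  have hC := countable_finitaryClosure hψ hD
  obtain ⟨U, huU, hU, V, hvV, hV, hUV⟩ := exists_open_nhds_disjoint_closure hne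
  obtain ⟨M, hM, huM, hMU⟩ := (h.isNetworkOf hC).exists_mem_mapsTo hU huU
  obtain ⟨M', hM', hvM', hMV⟩ := (h.isNetworkOf hC).exists_mem_mapsTo hV hvV
  obtain ⟨F, hF, hMF, hMF'⟩ := h.omegaMonotone.exists_finset_of_mem_of_mem hC hM hM'
  obtain ⟨G, hG, hFG⟩ := exists_finset_coe_subset_finitaryClosure hF
  have hsub : N F ⊆ N (finitaryClosure ψ G) := h.omegaMonotone.2.1 _ _ F.countable_toSet
    (countable_finitaryClosure hψ G.countable_toSet) hFG
  have hmem {W M : Set X} (hM : M ∈ N F) (hMW : MapsTo (r (finitaryClosure ψ D)) M W) {x : X}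
      (hx : x ∈ M) : r (finitaryClosure ψ G) x ∈ closure W :=
    closure_mono inter_subset_left <| h.apply_mem_closure_of_mapsTo hC
      ((finitaryClosure ψ).monotone hG) (hsat G G.countable_toSet) (hsub hM) hMW hx
  exact disjoint_left.1 hUV (hmem hMF hMU huM) (huv G hG ▸ hmem hMF' hMV hvM')

theorem eq_of_mem_closure_finitaryClosure [T25Space X] {B : Set X} {y z : X}
    (hy : y ∈ closure (finitaryClosure ψ B)) (hz : z ∈ closure (finitaryClosure ψ B))
    (hyz : ∀ F : Finset X, ↑F ⊆ B → r (finitaryClosure ψ F) y = r (finitaryClosure ψ F) z) :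
    y = z := by
  obtain ⟨D, hDB, hD, hyD⟩ := h.exists_countable_subset_mem_closure_finitaryClosure hy
  obtain ⟨D', hDB', hD', hzD'⟩ := h.exists_countable_subset_mem_closure_finitaryClosure hz
  have hE := hD.union hD'
  have hfix {E : Set X} (hE' : E ⊆ D ∪ D') {x : X} (hx : x ∈ closure (finitaryClosure ψ E)) :
      r (finitaryClosure ψ (D ∪ D')) x = x :=
    h.apply_eq_self_of_mem_closure (countable_finitaryClosure hψ hE)
      (closure_mono ((finitaryClosure ψ).monotone hE') hx)
  rw [← hfix subset_union_left hyD, ← hfix subset_union_right hzD']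
  exact h.eq_of_forall_finset hψ hsat hE fun F hF => hyz F (hF.trans (union_subset hDB hDB'))

end IsMonotoneRetraction

end MonotoneRetraction

theorem exists_continuousMap_lift_of_injOn {X Y Z : Type*} [TopologicalSpace X]
    [TopologicalSpace Y] [T2Space Y] [TopologicalSpace Z] {T : Set X} (hT : IsCompact T)
    {q : X → Y} (hq : ContinuousOn q T) (hinj : InjOn q T) {p : Z → Y} (hp : Continuous p)
    (hpT : ∀ z, p z ∈ q '' T) : ∃ R : C(Z, X), ∀ z, R z ∈ T ∧ q (R z) = p z := by
  have := isCompact_iff_compactSpace.1 hT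
  have hemb : IsClosedEmbedding (T.domRestrict q) := hq.domRestrict.isClosedEmbedding hinj.injective
  choose R hRT hR using hpT
  have hcont : Continuous fun z => (⟨R z, hRT z⟩ : T) :=
    hemb.isInducing.continuous_iff.2 (hp.congr fun z => (hR z).symm)
  exact ⟨⟨R, continuous_subtype_val.comp hcont⟩, fun z => ⟨hRT z, hR z⟩⟩

/-- A full retractional skeleton, encoded through its retractions indexed by finite sets. The set
`hull B` is the range of the retraction associated with `B`; this retraction is given for finite
`B`, as `retr`, and is recovered for arbitrary `B` as `RetractionSystem.proj`. -/
structure RetractionSystem (K : Type*) [TopologicalSpace K] where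
  hull : Set K → Set K
  retr : Finset K → C(K, K)
  monotone_hull : Monotone hull
  isClosed_hull (B : Set K) : IsClosed (hull B)
  hull_univ : hull univ = univ
  retr_mem_hull (F : Finset K) (x : K) : retr F x ∈ hull F
  retr_retr_of_subset {F G : Finset K} (hFG : F ⊆ G) (x : K) : retr F (retr G x) = retr F x
  eq_of_forall_retr_eq {B : Set K} {y z : K} (hy : y ∈ hull B) (hz : z ∈ hull B)
    (hyz : ∀ F : Finset K, ↑F ⊆ B → retr F y = retr F z) : y = z
  exists_countable_subset {B : Set K} {y : K} (hy : y ∈ hull B) :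
    ∃ D ⊆ B, D.Countable ∧ y ∈ hull D
  exists_countable_separatesOn {D : Set K} (hD : D.Countable) :
    ∃ G : Set C(K, ℝ), G.Countable ∧ SeparatesOn G (hull D)

theorem IsMonotoneRetraction.nonempty_retractionSystem {K : Type*} [TopologicalSpace K]
    [T4Space K] {r : Set K → K → K} {N : Set K → Set (Set K)} (h : IsMonotoneRetraction r N) :
    Nonempty (RetractionSystem K) := by
  obtain ⟨ψ, hψ, hsat⟩ := h.omegaMonotone.exists_finitaryClosure_isSaturated
  have hcount {D : Set K} (hD : D.Countable) := countable_finitaryClosure hψ hD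
  exact ⟨{
    hull := fun B => closure (finitaryClosure ψ B)
    retr := fun F => ⟨r (finitaryClosure ψ F), h.continuous (hcount F.countable_toSet)⟩
    monotone_hull := fun _ _ hAB => closure_mono ((finitaryClosure ψ).monotone hAB)
    isClosed_hull := fun _ => isClosed_closure
    hull_univ := univ_subset_iff.1 (((finitaryClosure ψ).le_closure univ).trans subset_closure)
    retr_mem_hull := fun F =>
      h.apply_mem_closure (hcount F.countable_toSet) (hsat F F.countable_toSet)
    retr_retr_of_subset := fun {_ G} hFG => h.apply_apply_of_subset (hcount G.countable_toSet)
      ((finitaryClosure ψ).monotone (Finset.coe_subset.2 hFG)) (hsat G G.countable_toSet)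
    eq_of_forall_retr_eq := h.eq_of_mem_closure_finitaryClosure hψ hsat
    exists_countable_subset := h.exists_countable_subset_mem_closure_finitaryClosure
    exists_countable_separatesOn := fun {D} hD => by
      obtain ⟨G, hGc, hG⟩ := (h.isNetworkOf (hcount hD)).exists_countable_separatesOn_range
        (h.omegaMonotone.1 _ (hcount hD))
      exact ⟨G, hGc, hG.mono fun y hy => ⟨y, h.apply_eq_self_of_mem_closure (hcount hD) hy⟩⟩ }⟩

namespace RetractionSystem

variable {K : Type*} [TopologicalSpace K] [CompactSpace K] [T2Space K] (S : RetractionSystem K)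

theorem exists_mem_hull_forall_retr_eq (B : Set K) (x : K) :
    ∃ y ∈ S.hull B, ∀ F : Finset K, ↑F ⊆ B → S.retr F y = S.retr F x := by
  classical
  let ι := {F : Finset K // ↑F ⊆ B}
  let q : K → ι → K := fun x F => S.retr F x
  have hq : Continuous q := continuous_pi fun F => (S.retr F).continuous
  have : Nonempty ι := ⟨∅, by simp⟩
  have : IsDirectedOrder ι := ⟨directed_finset_coe_subset B⟩
  have hlim : Tendsto (fun F : ι => q (S.retr F x)) atTop (𝓝 (q x)) :=
    tendsto_pi_nhds.2 fun G => tendsto_const_nhds.congr' <|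
      (eventually_ge_atTop G).mono fun F hGF => (S.retr_retr_of_subset hGF x).symm
  obtain ⟨y, hy, hyx⟩ := ((S.isClosed_hull B).isCompact.image hq).isClosed.mem_of_tendsto hlim
    (.of_forall fun F => mem_image_of_mem q (S.monotone_hull F.2 (S.retr_mem_hull F x)))
  exact ⟨y, hy, fun F hF => congrFun hyx ⟨F, hF⟩⟩

theorem exists_proj (B : Set K) :
    ∃ R : C(K, K), ∀ x, R x ∈ S.hull B ∧ ∀ F : Finset K, ↑F ⊆ B → S.retr F (R x) = S.retr F x := by
  let q : K → {F : Finset K // ↑F ⊆ B} → K := fun x F => S.retr F x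
  have hq : Continuous q := continuous_pi fun F => (S.retr F).continuous
  have hinj : InjOn q (S.hull B) := fun y hy z hz hyz =>
    S.eq_of_forall_retr_eq hy hz fun F hF => congrFun hyz ⟨F, hF⟩
  obtain ⟨R, hR⟩ := exists_continuousMap_lift_of_injOn (S.isClosed_hull B).isCompact
    hq.continuousOn hinj hq fun x =>
      let ⟨y, hy, hyx⟩ := S.exists_mem_hull_forall_retr_eq B x
      ⟨y, hy, funext fun F => hyx F F.2⟩
  exact ⟨R, fun x => ⟨(hR x).1, fun F hF => congrFun (hR x).2 ⟨F, hF⟩⟩⟩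

/-- The retraction of `K` onto `S.hull B`. -/
noncomputable def proj (B : Set K) : C(K, K) :=
  (S.exists_proj B).choose

theorem proj_mem_hull (B : Set K) (x : K) : S.proj B x ∈ S.hull B :=
  ((S.exists_proj B).choose_spec x).1

theorem retr_proj {B : Set K} {F : Finset K} (hF : ↑F ⊆ B) (x : K) :
    S.retr F (S.proj B x) = S.retr F x :=
  ((S.exists_proj B).choose_spec x).2 F hF

theorem proj_eq_self {B : Set K} {x : K} (hx : x ∈ S.hull B) : S.proj B x = x :=
  S.eq_of_forall_retr_eq (S.proj_mem_hull B x) hx fun _ hF => S.retr_proj hF x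

theorem proj_eq_proj_of_forall_retr_eq {B : Set K} {x y : K}
    (hxy : ∀ F : Finset K, ↑F ⊆ B → S.retr F x = S.retr F y) : S.proj B x = S.proj B y :=
  S.eq_of_forall_retr_eq (S.proj_mem_hull B x) (S.proj_mem_hull B y) fun F hF => by
    rw [S.retr_proj hF, S.retr_proj hF, hxy F hF]

theorem retr_eq_of_proj_eq {B : Set K} {x y : K} (hxy : S.proj B x = S.proj B y) {F : Finset K}
    (hF : ↑F ⊆ B) : S.retr F x = S.retr F y := by
  rw [← S.retr_proj hF x, hxy, S.retr_proj hF]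

theorem proj_proj_of_subset {A B : Set K} (hAB : A ⊆ B) (x : K) :
    S.proj A (S.proj B x) = S.proj A x :=
  S.proj_eq_proj_of_forall_retr_eq fun _ hF => S.retr_proj (hF.trans hAB) x

end RetractionSystem

section WellOrder

theorem countable_of_forall_isLowerSet {ι : Type*} [PartialOrder ι] [WellFoundedLT ι] {J : Set ι}
    (h : ∀ I : Set ι, IsLowerSet I → ∃ E ⊆ I, E.Countable ∧ ∀ k ∈ J ∩ I, ∃ j ∈ E, k ≤ j) :
    J.Countable := by
  have hlower {I : Set ι} (hI : IsLowerSet I) (hIJ : ∀ j ∈ I, (J ∩ Iic j).Countable) :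
      (J ∩ I).Countable := by
    obtain ⟨E, hEI, hE, hJE⟩ := h I hI
    refine (hE.biUnion fun j hj => hIJ j (hEI hj)).mono fun k hk => ?_
    obtain ⟨j, hj, hkj⟩ := hJE k hk
    exact mem_biUnion hj ⟨hk.1, hkj⟩
  have hIic (j : ι) : (J ∩ Iic j).Countable := by
    induction j using WellFoundedLT.induction with
    | ind j ih =>
      refine ((hlower (isLowerSet_Iio j) ih).insert j).mono fun k ⟨hkJ, hkj⟩ => ?_
      exact hkj.eq_or_lt.imp_right fun hlt => ⟨hkJ, hlt⟩
  simpa using hlower isLowerSet_univ fun j _ => hIic j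

theorem exists_linearOrder_forall_mk_Iic_lt (α : Type*) [Infinite α] :
    ∃ (_ : LinearOrder α) (_ : WellFoundedLT α), ∀ a : α, #(Iic a) < #α := by
  obtain ⟨_, _, hord⟩ := Cardinal.exists_ord_eq_type_lt α
  refine ⟨_, ‹_›, fun a => ?_⟩
  have hinf : ℵ₀ ≤ #α := Cardinal.aleph0_le_mk α
  rw [← Iio_insert]
  exact Cardinal.mk_insert_le.trans_lt <| Cardinal.add_lt_of_lt hinf (Cardinal.mk_Iio_lt a hord)
    (Cardinal.one_lt_aleph0.trans_le hinf)

end WellOrder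

namespace RetractionSystem

variable {K ι : Type*} [TopologicalSpace K] [CompactSpace K] [T2Space K]
  (S : RetractionSystem K) [LinearOrder ι] {e : ι → K}

theorem countable_setOf_proj_Iic_ne [WellFoundedLT ι] (e : ι → K) (x : K) :
    {i | S.proj (e '' Iic i) x ≠ S.proj (e '' Iio i) x}.Countable := by
  -- By tightness the projection of `x` for `I` lies in the hull of a countable `E ⊆ I`, and then no
  -- jump in `I` lies beyond `E`.
  refine countable_of_forall_isLowerSet fun I hI => ?_
  obtain ⟨D, hDI, hD, hx⟩ := S.exists_countable_subset (S.proj_mem_hull (e '' I) x)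
  obtain ⟨E, hEI, hED⟩ := SurjOn.exists_bijOn_subset hDI
  refine ⟨E, hEI, hED.mapsTo.countable_of_injOn hED.injOn hD, fun k ⟨hk, hkI⟩ => ?_⟩
  by_contra! hEk
  have hxk : S.proj (e '' I) x ∈ S.hull (e '' Iio k) :=
    S.monotone_hull (hED.image_eq ▸ image_mono hEk) hx
  have heq {A : Set ι} (hkA : Iio k ⊆ A) (hAk : A ⊆ Iic k) :
      S.proj (e '' A) x = S.proj (e '' I) x := by
    rw [← S.proj_proj_of_subset (image_mono (hAk.trans (hI.Iic_subset hkI))) x,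
      S.proj_eq_self (S.monotone_hull (image_mono hkA) hxk)]
  exact hk ((heq Iio_subset_Iic_self Subset.rfl).trans (heq Subset.rfl Iio_subset_Iic_self).symm)

theorem proj_image_eq_of_forall_Iic {x y : K} (h₀ : S.proj ∅ x = S.proj ∅ y) {I : Set ι}
    (hI : ∀ j ∈ I, S.proj (e '' Iic j) x = S.proj (e '' Iic j) y) :
    S.proj (e '' I) x = S.proj (e '' I) y := by
  classical
  refine S.proj_eq_proj_of_forall_retr_eq fun F hF => ?_
  obtain ⟨E, hEI, rfl⟩ := Finset.subset_set_image_iff.1 hF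
  obtain rfl | hne := E.eq_empty_or_nonempty
  · exact S.retr_eq_of_proj_eq h₀ (by simp)
  · refine S.retr_eq_of_proj_eq (hI _ (hEI (E.max'_mem hne))) ?_
    rw [Finset.coe_image]
    exact image_mono E.le_max'

theorem eq_of_forall_proj_Iic_eq [WellFoundedLT ι] {x y : K} (hx : x ∈ S.hull (range e))
    (hy : y ∈ S.hull (range e)) (h₀ : S.proj ∅ x = S.proj ∅ y)
    (hsucc : ∀ i, S.proj (e '' Iio i) x = S.proj (e '' Iio i) y →
      S.proj (e '' Iic i) x = S.proj (e '' Iic i) y) : x = y := by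
  have hIic (i : ι) : S.proj (e '' Iic i) x = S.proj (e '' Iic i) y := by
    induction i using WellFoundedLT.induction with
    | ind i ih => exact hsucc i (S.proj_image_eq_of_forall_Iic h₀ ih)
  have := S.proj_image_eq_of_forall_Iic h₀ (I := univ) fun j _ => hIic j
  rwa [image_univ, S.proj_eq_self hx, S.proj_eq_self hy] at this

end RetractionSystem

section PointCountable

/-- The family `G` of real-valued functions is point-countable: at each point, only countably many
of its members are nonzero. -/
def IsPointCountable {X : Type*} [TopologicalSpace X] (G : Set C(X, ℝ)) : Prop :=
  ∀ x, {g ∈ G | g x ≠ 0}.Countable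

variable {X Y : Type*} [TopologicalSpace X] [TopologicalSpace Y]

theorem isPointCountable_of_countable {G : Set C(X, ℝ)} (hG : G.Countable) : IsPointCountable G :=
  fun _ => hG.mono (sep_subset _ _)

theorem IsPointCountable.union {G G' : Set C(X, ℝ)} (hG : IsPointCountable G)
    (hG' : IsPointCountable G') : IsPointCountable (G ∪ G') := fun x =>
  ((hG x).union (hG' x)).mono fun _ ⟨hg, hgx⟩ => hg.imp (And.intro · hgx) (And.intro · hgx)

theorem isPointCountable_iUnion {ι : Type*} {G : ι → Set C(X, ℝ)}
    (hG : ∀ i, IsPointCountable (G i)) (hcount : ∀ x, {i | ∃ g ∈ G i, g x ≠ 0}.Countable) :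
    IsPointCountable (⋃ i, G i) := fun x => by
  refine ((hcount x).biUnion fun i _ => hG i x).mono fun g ⟨hg, hgx⟩ => ?_
  obtain ⟨i, hi⟩ := mem_iUnion.1 hg
  exact mem_biUnion (show i ∈ {i | ∃ g ∈ G i, g x ≠ 0} from ⟨g, hi, hgx⟩) ⟨hi, hgx⟩

theorem IsPointCountable.image_comp_sub_comp {G : Set C(Y, ℝ)} (hG : IsPointCountable G)
    (φ χ : C(X, Y)) : IsPointCountable ((fun g => g.comp φ - g.comp χ) '' G) := fun x => by
  refine (((hG (φ x)).union (hG (χ x))).image fun g => g.comp φ - g.comp χ).mono ?_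
  rintro _ ⟨⟨g, hg, rfl⟩, hgx⟩
  have hne : g (φ x) ≠ 0 ∨ g (χ x) ≠ 0 := by
    by_contra! h₀
    simp [h₀] at hgx
  exact mem_image_of_mem _ (hne.imp (And.intro hg) (And.intro hg))

theorem IsPointCountable.isCorsonCompact {K : Type u} [TopologicalSpace K] {G : Set C(K, ℝ)}
    (hG : IsPointCountable G) (hsep : SeparatesOn G univ) : IsCorsonCompact K :=
  ⟨G, fun x g => g.1 x, continuous_pi fun g => g.1.continuous,
    fun x y hxy => hsep (mem_univ x) (mem_univ y) fun g hg => congrFun hxy ⟨g, hg⟩, fun x =>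
    ((hG x).preimage_of_injOn Subtype.val_injective.injOn).mono fun g hg => And.intro g.2 hg⟩

end PointCountable

namespace RetractionSystem

theorem exists_isPointCountable_separatesOn_hull_range {K ι : Type*} [TopologicalSpace K]
    [CompactSpace K] [T2Space K] (S : RetractionSystem K) [LinearOrder ι] [WellFoundedLT ι]
    {e : ι → K}
    (h : ∀ i, ∃ G : Set C(K, ℝ), IsPointCountable G ∧ SeparatesOn G (S.hull (e '' Iic i))) :
    ∃ G : Set C(K, ℝ), IsPointCountable G ∧ SeparatesOn G (S.hull (range e)) := by
  obtain ⟨G₀, hG₀c, hG₀⟩ := S.exists_countable_separatesOn countable_empty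
  choose G hGc hG using h
  let jump (i : ι) (g : C(K, ℝ)) : C(K, ℝ) :=
    g.comp (S.proj (e '' Iic i)) - g.comp (S.proj (e '' Iio i))
  refine ⟨(fun g => g.comp (S.proj ∅)) '' G₀ ∪ ⋃ i, jump i '' G i, ?_, fun x hx y hy hxy => ?_⟩
  · refine (isPointCountable_of_countable (hG₀c.image _)).union <|
      isPointCountable_iUnion (fun i => (hGc i).image_comp_sub_comp _ _) fun x => ?_
    refine (S.countable_setOf_proj_Iic_ne e x).mono ?_
    rintro i ⟨_, ⟨g, -, rfl⟩, hgx⟩ heq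
    exact hgx (sub_eq_zero.2 (congrArg g heq))
  · refine S.eq_of_forall_proj_Iic_eq hx hy ?_ fun i hi => ?_
    · exact hG₀ (S.proj_mem_hull _ _) (S.proj_mem_hull _ _) fun g hg =>
        hxy _ (.inl (mem_image_of_mem _ hg))
    · refine hG i (S.proj_mem_hull _ _) (S.proj_mem_hull _ _) fun g hg => ?_
      have hjump : g (S.proj (e '' Iic i) x) - g (S.proj (e '' Iio i) x) =
          g (S.proj (e '' Iic i) y) - g (S.proj (e '' Iio i) y) :=
        hxy (jump i g) (.inr (mem_iUnion_of_mem i (mem_image_of_mem _ hg)))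
      rwa [hi, sub_left_inj] at hjump

variable {K : Type u} [TopologicalSpace K] [CompactSpace K] [T2Space K]

theorem exists_isPointCountable_separatesOn_hull (S : RetractionSystem K) (B : Set K) :
    ∃ G : Set C(K, ℝ), IsPointCountable G ∧ SeparatesOn G (S.hull B) := by
  induction hκ : #B using WellFoundedLT.induction generalizing B with
  | ind κ ih =>
    obtain hB | hB := em B.Countable
    · obtain ⟨G, hGc, hG⟩ := S.exists_countable_separatesOn hB
      exact ⟨G, isPointCountable_of_countable hGc, hG⟩
    · have : Infinite B := Set.infinite_coe_iff.2 (mt Set.Finite.countable hB)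
      obtain ⟨_, _, hlt⟩ := exists_linearOrder_forall_mk_Iic_lt B
      rw [← Subtype.range_val (s := B)]
      exact S.exists_isPointCountable_separatesOn_hull_range fun i =>
        ih _ (hκ ▸ Cardinal.mk_image_le.trans_lt (hlt i)) _ rfl

theorem isCorsonCompact (S : RetractionSystem K) : IsCorsonCompact K := by
  obtain ⟨G, hGc, hG⟩ := S.exists_isPointCountable_separatesOn_hull univ
  exact hGc.isCorsonCompact (S.hull_univ ▸ hG)

end RetractionSystem

theorem MonotonicallyRetractable.isCorsonCompact {K : Type u} [TopologicalSpace K]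
    [CompactSpace K] [T2Space K] (h : MonotonicallyRetractable K) : IsCorsonCompact K := by
  obtain ⟨r, N, hrN⟩ := h.exists_isMonotoneRetraction
  obtain ⟨S⟩ := hrN.nonempty_retractionSystem
  exact S.isCorsonCompact

theorem compact_monotonicallyRetractable_iff_corson
    (K : Type u) [TopologicalSpace K] [CompactSpace K] [T2Space K] :
    MonotonicallyRetractable K ↔ IsCorsonCompact K :=
  ⟨MonotonicallyRetractable.isCorsonCompact, IsCorsonCompact.monotonicallyRetractable⟩
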